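/- There exists an infinite word of quadratic subword complexity that does not belong to 𝓦_3: the word u = ∏_{k=1}^∞ a b^k over {a,b} satisfies p_u(n) = Θ(n²), and there do not exist languages S_1, S_2, S_3 with p_{S_i}(n) = O(1) for each i such that every factor of u belongs to S_1·S_2·S_3. -/

import Mathlib

/-! A word `a l a`, with no `a` in `l`, occurs at most once in `u`, because the runs of `b` in `u`
have pairwise distinct lengths. Hence a factor with at least two `a`s occurs only once, and the
complexity is governed by the number of positions from which a window of length `n` sees two `a`s,
which is of order `n ^ 2`.

Suppose `Fac(u) ⊆ S₁ · S₂ · S₃`, and consider the windows `[p, q)` of `u` for which `p` lies within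
the blocks `a b^k` with `k` of order `M`, and which contain between `R` and `2 R` letters `a`, where
`R` is small against `M`. There are at least `R M ^ 3` of them, and their lengths are `O(R M)`. One
of the three pieces of such a window has two `a`s, hence determines the window together with the
numbers of letters before and after it. If this holds for the first or the last piece, one of these
numbers is `0`, which accounts for only `O((R M) ^ 2)` windows. Otherwise the middle piece has all
but at most two of the `a`s, the outer ones have length `O(M)`, and so `S₂` has at least of order
`R M` words of length `O(R M)` with about `R` to `2 R` letters `a`. Letting `R` run through powers
of `4` while `R M` stays fixed gives arbitrarily many disjoint sets of such words in `S₂`, which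
contradicts `p_{S₂}(n) = O(1)`. -/

/-- The factor of the infinite word `u` of length `n` starting at position `i`. -/
def wordSeg {α : Type*} (u : ℕ → α) (i n : ℕ) : List α :=
  (List.range n).map (fun t => u (i + t))

/-- The set of (finite) factors of the infinite word `u`. -/
def Factors {α : Type*} (u : ℕ → α) : Set (List α) :=
  {w | ∃ i, w = wordSeg u i w.length}

/-- Subword complexity: the number of distinct factors of `u` of length `n`. -/
noncomputable def complexity {α : Type*} (u : ℕ → α) (n : ℕ) : ℕ :=
  {w : List α | w.length = n ∧ w ∈ Factors u}.ncard

/-- `p_L(n)`: the number of words of length `n` in the language `L`. -/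
noncomputable def langComplexity {α : Type*} (L : Set (List α)) (n : ℕ) : ℕ :=
  {w ∈ L | w.length = n}.ncard

/-- The infinite word `u = ∏_{k=1}^∞ a b^k = a b a b² a b³ ⋯` over `{a, b}`, with
`true = a` and `false = b`. -/
def uAB (n : ℕ) : Bool := decide (∃ k ≤ n, 2 * n = k * (k + 3))

open Finset

/-! ### Windows of an infinite word -/

section Windows

variable {α : Type*} {u : ℕ → α}

lemma length_wordSeg (u : ℕ → α) (i n : ℕ) : (wordSeg u i n).length = n := by
  simp [wordSeg]

lemma wordSeg_add (u : ℕ → α) (i m n : ℕ) :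
    wordSeg u i (m + n) = wordSeg u i m ++ wordSeg u (i + m) n := by
  simp [wordSeg, List.range_add, Function.comp_def, add_assoc]

lemma wordSeg_eq_wordSeg_iff {v : ℕ → α} {i j n : ℕ} :
    wordSeg u i n = wordSeg v j n ↔ ∀ t < n, u (i + t) = v (j + t) := by
  simp [wordSeg]

lemma wordSeg_eq_append_iff {i n : ℕ} {x y : List α} :
    wordSeg u i n = x ++ y ↔
      wordSeg u i x.length = x ∧ wordSeg u (i + x.length) y.length = y ∧
        n = x.length + y.length := by
  constructor
  · intro h
    have hn : n = x.length + y.length := by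
      rw [← length_wordSeg u i n, h, List.length_append]
    rw [hn, wordSeg_add] at h
    obtain ⟨hx, hy⟩ := List.append_inj h (length_wordSeg ..)
    exact ⟨hx, hy, hn⟩
  · rintro ⟨hx, hy, rfl⟩
    rw [wordSeg_add, hx, hy]

lemma wordSeg_mem_factors (u : ℕ → α) (i n : ℕ) : wordSeg u i n ∈ Factors u :=
  ⟨i, by rw [length_wordSeg]⟩

lemma complexity_eq_ncard_range (u : ℕ → α) (n : ℕ) :
    complexity u n = (Set.range fun i => wordSeg u i n).ncard := by
  refine congrArg Set.ncard (Set.ext fun w => ⟨?_, ?_⟩)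
  · rintro ⟨rfl, i, hi⟩
    exact ⟨i, hi.symm⟩
  · rintro ⟨i, rfl⟩
    exact ⟨length_wordSeg .., wordSeg_mem_factors ..⟩

lemma le_complexity_of_injOn [Finite α] {n K : ℕ}
    (h : Set.InjOn (fun i => wordSeg u i n) (range K)) : K ≤ complexity u n := by
  have hfin : (Set.range fun i => wordSeg u i n).Finite :=
    (List.finite_length_eq α n).subset <| Set.range_subset_iff.2 fun _ => length_wordSeg ..
  calc K = ((fun i => wordSeg u i n) '' (range K : Set ℕ)).ncard := by
        rw [h.ncard_image, Set.ncard_coe_finset, card_range]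
    _ ≤ _ := Set.ncard_le_ncard (Set.image_subset_range ..) hfin
    _ = complexity u n := (complexity_eq_ncard_range u n).symm

lemma complexity_le_of_forall_exists_lt {n K : ℕ}
    (h : ∀ i, ∃ j < K, wordSeg u j n = wordSeg u i n) : complexity u n ≤ K := by
  have hsub : (Set.range fun i => wordSeg u i n) ⊆
      (fun j => wordSeg u j n) '' (range K : Set ℕ) :=
    Set.range_subset_iff.2 fun i => by simpa using h i
  calc complexity u n ≤ ((fun j => wordSeg u j n) '' (range K : Set ℕ)).ncard := by
        rw [complexity_eq_ncard_range]
        exact Set.ncard_le_ncard hsub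
    _ ≤ (range K : Set ℕ).ncard := Set.ncard_image_le
    _ = K := by rw [Set.ncard_coe_finset, card_range]

lemma count_add_eq_count_add_count_wordSeg [DecidableEq α] (u : ℕ → α) (a : α) (i n : ℕ) :
    Nat.count (u · = a) (i + n) = Nat.count (u · = a) i + (wordSeg u i n).count a := by
  rw [Nat.count_add, Nat.add_left_cancel_iff]
  simp [Nat.count, wordSeg, List.count, List.countP_map, Function.comp_def, BEq.beq]

/-- The window `[p, q)` of `u` consists of `s` letters, the word `w`, and `t` more letters. -/
def SplitsAround (u : ℕ → α) (p q s : ℕ) (w : List α) (t : ℕ) : Prop :=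
  wordSeg u (p + s) w.length = w ∧ p + s + w.length + t = q

lemma splitsAround_of_wordSeg_eq_append {p q : ℕ} (hpq : p ≤ q) {x y z : List α}
    (h : wordSeg u p (q - p) = x ++ y ++ z) :
    SplitsAround u p q 0 x (y.length + z.length) ∧
      SplitsAround u p q x.length y z.length ∧
      SplitsAround u p q (x.length + y.length) z 0 := by
  obtain ⟨hxy, hz, hn⟩ := wordSeg_eq_append_iff.1 h
  obtain ⟨hx, hy, -⟩ := wordSeg_eq_append_iff.1 hxy
  rw [List.length_append] at hz hn
  exact ⟨⟨hx, by omega⟩, ⟨hy, by omega⟩, ⟨hz, by omega⟩⟩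

end Windows

/-! ### Words without repeated returns -/

section Returns

variable {α : Type*} {u : ℕ → α} {a : α}

/-- Every complete return word to the letter `a`, i.e. every word `a l a` where `a` does not occur
in `l`, has at most one occurrence in `u`. -/
def UniqueReturns (u : ℕ → α) (a : α) : Prop :=
  ∀ ⦃l : List α⦄, a ∉ l → ∀ ⦃i j : ℕ⦄,
    wordSeg u i (l.length + 2) = a :: l ++ [a] →
      wordSeg u j (l.length + 2) = a :: l ++ [a] → i = j

variable [DecidableEq α]

lemma exists_eq_append_return_append {w : List α} (h : 2 ≤ w.count a) :
    ∃ l₁ l l₂, a ∉ l ∧ w = l₁ ++ (a :: l ++ [a]) ++ l₂ := by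
  have hw : a ∈ w := List.count_pos_iff.1 (Nat.zero_lt_of_lt h)
  obtain ⟨l₁, w', rfl, h₁⟩ := List.eq_append_cons_of_mem hw
  have hw' : a ∈ w' := by
    rw [List.count_append, List.count_eq_zero_of_not_mem h₁, List.count_cons_self] at h
    exact List.count_pos_iff.1 (by omega)
  obtain ⟨l, l₂, rfl, hl⟩ := List.eq_append_cons_of_mem hw'
  exact ⟨l₁, l, l₂, hl, by simp⟩

lemma UniqueReturns.eq_of_wordSeg_eq (hu : UniqueReturns u a) {i j : ℕ} {w : List α}
    (hw : 2 ≤ w.count a) (hi : wordSeg u i w.length = w) (hj : wordSeg u j w.length = w) :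
    i = j := by
  obtain ⟨l₁, l, l₂, hl, rfl⟩ := exists_eq_append_return_append hw
  have return_at {k : ℕ} (hk : wordSeg u k (l₁ ++ (a :: l ++ [a]) ++ l₂).length =
      l₁ ++ (a :: l ++ [a]) ++ l₂) :
      wordSeg u (k + l₁.length) (l.length + 2) = a :: l ++ [a] := by
    simpa using (wordSeg_eq_append_iff.1 (wordSeg_eq_append_iff.1 hk).1).2.1
  exact Nat.add_right_cancel (hu hl (return_at hi) (return_at hj))

lemma UniqueReturns.card_windows_le (hu : UniqueReturns u a) (X : Finset (Σ _ : ℕ, ℕ))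
    (T : Finset (List α × ℕ × ℕ))
    (h : ∀ I ∈ X, ∃ e ∈ T, 2 ≤ e.1.count a ∧ SplitsAround u I.1 I.2 e.2.1 e.1 e.2.2) :
    #X ≤ #T := by
  refine card_le_card_of_forall_subsingleton
    (fun I e => 2 ≤ e.1.count a ∧ SplitsAround u I.1 I.2 e.2.1 e.1 e.2.2) h ?_
  rintro ⟨w, s, t⟩ - ⟨p, q⟩ ⟨-, hw, hp, hq⟩ ⟨p', q'⟩ ⟨-, -, hp', hq'⟩
  dsimp only at hw hp hq hp' hq'
  obtain rfl : p = p' := Nat.add_right_cancel (hu.eq_of_wordSeg_eq hw hp hp')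
  rw [← hq, ← hq']

end Returns

/-! ### The letters `a` of `u` -/

/-- The position in `uAB` of the letter `a` number `k`, counted from `0`: it starts the block
`a b^(k+1)` of length `k + 2`. -/
def posA : ℕ → ℕ
  | 0 => 0
  | k + 1 => posA k + (k + 2)

lemma posA_succ (k : ℕ) : posA (k + 1) = posA k + (k + 2) := rfl

lemma two_mul_posA (k : ℕ) : 2 * posA k = k * (k + 3) := by
  induction k with
  | zero => rfl
  | succ k ih => rw [posA_succ, mul_add, ih]; ring

lemma posA_add (k r : ℕ) : posA (k + r) = posA k + posA r + k * r := by
  have hk := two_mul_posA k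
  have hr := two_mul_posA r
  have hkr := two_mul_posA (k + r)
  linarith

lemma posA_strictMono : StrictMono posA :=
  strictMono_nat_of_lt_succ fun k => by rw [posA_succ]; omega

lemma uAB_eq_true_iff {n : ℕ} : uAB n = true ↔ ∃ k, posA k = n := by
  simp only [uAB, decide_eq_true_eq]
  constructor
  · rintro ⟨k, -, hk⟩
    exact ⟨k, by have := two_mul_posA k; omega⟩
  · rintro ⟨k, rfl⟩
    exact ⟨k, posA_strictMono.le_apply, two_mul_posA k⟩

lemma uAB_posA (k : ℕ) : uAB (posA k) = true := uAB_eq_true_iff.2 ⟨k, rfl⟩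

lemma infinite_setOf_uAB : {n | uAB n = true}.Infinite :=
  Set.infinite_of_injective_forall_mem posA_strictMono.injective uAB_posA

lemma nth_uAB (k : ℕ) : Nat.nth (uAB · = true) k = posA k := by
  rw [← Nat.nth_comp_of_strictMono posA_strictMono (fun n hn => uAB_eq_true_iff.1 hn)
    fun hfin => absurd hfin infinite_setOf_uAB]
  simp only [uAB_posA, Nat.nth_true]

/-- The number of letters `a` of `uAB` before position `n`. As a function it is the lower adjoint of
`posA`. -/
def countA (n : ℕ) : ℕ := Nat.count (uAB · = true) n

lemma countA_le_iff {n k : ℕ} : countA n ≤ k ↔ n ≤ posA k := by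
  rw [countA, Nat.count_le_iff_le_nth infinite_setOf_uAB, nth_uAB]

lemma lt_countA_iff {n k : ℕ} : k < countA n ↔ posA k < n := by
  rw [countA, Nat.lt_nth_iff_count_lt infinite_setOf_uAB, nth_uAB]

lemma le_posA_countA (n : ℕ) : n ≤ posA (countA n) := countA_le_iff.1 le_rfl

lemma countA_mono : Monotone countA := Nat.count_monotone _

lemma countA_add (p n : ℕ) : countA (p + n) = countA p + (wordSeg uAB p n).count true :=
  count_add_eq_count_add_count_wordSeg uAB true p n

lemma countA_posA (k : ℕ) : countA (posA k) = k := by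
  rw [← nth_uAB, countA, Nat.count_nth_of_infinite infinite_setOf_uAB]

lemma countA_eq_succ_iff {n k : ℕ} : countA n = k + 1 ↔ posA k < n ∧ n ≤ posA (k + 1) := by
  rw [← lt_countA_iff, ← countA_le_iff]
  omega

lemma posA_countA_le (n : ℕ) : posA (countA n) ≤ n + countA n := by
  rcases hc : countA n with - | c
  · exact Nat.zero_le _
  · have := (countA_eq_succ_iff.1 hc).1
    rw [posA_succ]
    omega

lemma uAB_eq_true_iff_eq_posA_countA {p m : ℕ} (hpm : p ≤ m) (hm : m < posA (countA p + 1)) :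
    uAB m = true ↔ m = posA (countA p) := by
  rw [uAB_eq_true_iff]
  constructor
  · rintro ⟨k, rfl⟩
    have hle : countA p ≤ k := countA_le_iff.2 hpm
    have hlt : k < countA p + 1 := posA_strictMono.lt_iff_lt.1 hm
    rw [show k = countA p by omega]
  · rintro rfl
    exact ⟨_, rfl⟩

lemma uniqueReturns_uAB : UniqueReturns uAB true := by
  have start_eq {l : List Bool} (hl : true ∉ l) {i : ℕ}
      (hi : wordSeg uAB i (l.length + 2) = true :: l ++ [true]) :
      ∃ k, l.length = k + 1 ∧ i = posA k := by
    obtain ⟨hinit, hlast, -⟩ := wordSeg_eq_append_iff.1 hi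
    obtain ⟨hfirst, -, -⟩ := wordSeg_eq_append_iff (x := [true]) (y := l) |>.1 hinit
    obtain ⟨k, rfl⟩ : ∃ k, posA k = i := uAB_eq_true_iff.1 (by simpa [wordSeg] using hfirst)
    obtain ⟨m, hm⟩ : ∃ m, posA m = posA k + (l.length + 1) :=
      uAB_eq_true_iff.1 (by simpa [wordSeg] using hlast)
    have hmk : m = k + 1 := by
      have := countA_add (posA k) (true :: l).length
      rwa [hinit, List.length_cons, ← hm, countA_posA, countA_posA, List.count_cons_self,
        List.count_eq_zero_of_not_mem hl] at this
    rw [hmk, posA_succ] at hm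
    exact ⟨k, by omega, rfl⟩
  intro l hl i j hi hj
  obtain ⟨k, hk, rfl⟩ := start_eq hl hi
  obtain ⟨m, hm, rfl⟩ := start_eq hl hj
  rw [show k = m by omega]

lemma two_le_count_wordSeg {p n : ℕ} (h : 2 * countA p + 2 < n) :
    2 ≤ (wordSeg uAB p n).count true := by
  have hpos : posA (countA p + 1) < p + n := by
    have := posA_countA_le p
    rw [posA_succ]
    omega
  have hlt : countA p + 1 < countA (p + n) := lt_countA_iff.2 hpos
  rw [countA_add] at hlt
  omega

/-! ### Quadratic complexity -/

lemma posA_le_complexity {n K : ℕ} (h : 2 * K + 3 ≤ n) : posA K ≤ complexity uAB n := by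
  refine le_complexity_of_injOn fun p hp q _ hpq => ?_
  have hcount : countA p ≤ K := countA_le_iff.2 (mem_range.1 (mem_coe.1 hp)).le
  have htwo : 2 ≤ (wordSeg uAB p n).count true := two_le_count_wordSeg (by omega)
  exact uniqueReturns_uAB.eq_of_wordSeg_eq htwo (by rw [length_wordSeg])
    (by rw [length_wordSeg]; exact hpq.symm)

/-- Beyond `posA (n + 1)` a window of length `n` has at most one `a`, so the same word is also seen
from some position between `posA n` and `posA (n + 1)`. -/
lemma complexity_le_posA_succ (n : ℕ) : complexity uAB n ≤ posA (n + 1) + 1 := by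
  refine complexity_le_of_forall_exists_lt fun p => ?_
  rcases le_or_gt p (posA (n + 1)) with hp | hp
  · exact ⟨p, by omega, rfl⟩
  obtain ⟨d, hd⟩ := Nat.exists_eq_add_of_le (le_posA_countA p)
  obtain ⟨q, hq⟩ : ∃ q, posA (n + 1) = q + min d n :=
    Nat.exists_eq_add_of_le' (by rw [posA_succ]; omega)
  have hcq : countA q = n + 1 := countA_eq_succ_iff.2 (by rw [posA_succ] at hq ⊢; omega)
  have hcp : n + 1 < countA p := lt_countA_iff.2 hp
  refine ⟨q, by omega, wordSeg_eq_wordSeg_iff.2 fun t ht => ?_⟩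
  have hqt : q + t < posA (countA q + 1) := by rw [hcq, posA_succ]; omega
  have hpt : p + t < posA (countA p + 1) := by rw [posA_succ]; omega
  rw [Bool.eq_iff_iff, uAB_eq_true_iff_eq_posA_countA (Nat.le_add_right _ _) hqt,
    uAB_eq_true_iff_eq_posA_countA (Nat.le_add_right _ _) hpt, hcq]
  omega

lemma sq_le_mul_complexity {n : ℕ} (hn : 8 ≤ n) : n ^ 2 ≤ 32 * complexity uAB n := by
  obtain ⟨K, hK⟩ : ∃ K, K = (n - 3) / 2 := ⟨_, rfl⟩
  have hle : posA K ≤ complexity uAB n := posA_le_complexity (by omega)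
  have hpos := two_mul_posA K
  have hnK : n ≤ 2 * K + 4 := by omega
  have hK2 : 2 ≤ K := by omega
  nlinarith only [hle, hpos, hnK, hK2]

lemma complexity_le_sq {n : ℕ} (hn : 8 ≤ n) : complexity uAB n ≤ n ^ 2 := by
  have hle := complexity_le_posA_succ n
  have hpos := two_mul_posA (n + 1)
  nlinarith only [hle, hpos, hn]

/-! ### Counting the words of a language -/

section WordsUpTo

variable {α : Type*} [Finite α]

/-- The finite set of words of length at most `N` in the language `L`. -/
noncomputable def wordsUpTo (L : Set (List α)) (N : ℕ) : Finset (List α) :=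
  ((List.finite_length_le α N).subset fun _ hw => hw.2 :
    {w | w ∈ L ∧ w.length ≤ N}.Finite).toFinset

lemma mem_wordsUpTo {L : Set (List α)} {N : ℕ} {w : List α} :
    w ∈ wordsUpTo L N ↔ w ∈ L ∧ w.length ≤ N := by
  simp [wordsUpTo]

lemma card_wordsUpTo_le {L : Set (List α)} {C : ℕ} (hL : ∀ n, langComplexity L n ≤ C) (N : ℕ) :
    #(wordsUpTo L N) ≤ C * (N + 1) := by
  classical
  have hfib (n : ℕ) : #{w ∈ wordsUpTo L N | w.length = n} ≤ C := by
    refine le_trans ?_ (hL n)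
    rw [← Set.ncard_coe_finset]
    refine Set.ncard_le_ncard (fun w hw => ?_)
      ((List.finite_length_eq α n).subset fun _ hw => hw.2)
    rw [mem_coe, mem_filter, mem_wordsUpTo] at hw
    exact ⟨hw.1.1, hw.2⟩
  calc #(wordsUpTo L N) ≤ C * #(range (N + 1)) :=
        card_le_mul_card_image_of_maps_to
          (fun w hw => mem_range.2 (Nat.lt_succ_of_le (mem_wordsUpTo.1 hw).2)) C fun n _ => hfib n
    _ = C * (N + 1) := by rw [card_range]

end WordsUpTo

/-! ### Decompositions into three pieces -/

/-- The windows `[p, q)` of `uAB` with more than `M` and at most `2 M` letters `a` before `p`, and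
with more than `R` and at most `2 R` letters `a` in the window itself. For `R` small against `M`,
a decomposition of all of them into three pieces needs many middle pieces. -/
def windows (R M : ℕ) : Finset (Σ _ : ℕ, ℕ) :=
  (Ioc (posA M) (posA (2 * M))).sigma fun p =>
    Ioc (posA (countA p + R)) (posA (countA p + 2 * R))

lemma mem_windows {R M p q : ℕ} :
    ⟨p, q⟩ ∈ windows R M ↔ (M < countA p ∧ countA p ≤ 2 * M) ∧
      countA p + R < countA q ∧ countA q ≤ countA p + 2 * R := by
  simp only [windows, mem_sigma, mem_Ioc, countA_le_iff, lt_countA_iff]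

lemma mul_cube_le_card_windows (R M : ℕ) : R * M ^ 3 ≤ #(windows R M) := by
  have hstarts : M ^ 2 ≤ #(Ioc (posA M) (posA (2 * M))) := by
    rw [Nat.card_Ioc, two_mul, posA_add, ← sq]
    omega
  have hends : ∀ p ∈ Ioc (posA M) (posA (2 * M)),
      M * R ≤ #(Ioc (posA (countA p + R)) (posA (countA p + 2 * R))) := by
    intro p hp
    have hM : M ≤ countA p + R := by
      have := lt_countA_iff.2 (mem_Ioc.1 hp).1
      omega
    have := Nat.mul_le_mul_right R hM
    rw [Nat.card_Ioc, two_mul, ← add_assoc, posA_add _ R]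
    omega
  calc R * M ^ 3 = M ^ 2 * (M * R) := by ring
    _ ≤ #(Ioc (posA M) (posA (2 * M))) * (M * R) := Nat.mul_le_mul_right _ hstarts
    _ ≤ #(windows R M) := by
      rw [windows, card_sigma, ← smul_eq_mul]
      exact card_nsmul_le_sum _ _ _ hends

lemma length_le_of_mem_windows {R M p q : ℕ} (hR : 3 ≤ R) (hM : 2 * R ≤ M)
    (h : ⟨p, q⟩ ∈ windows R M) : q ≤ p + 7 * (R * M) := by
  obtain ⟨⟨-, hp⟩, -, hq⟩ := mem_windows.1 h
  have hqpos : q ≤ posA (countA p) + posA (2 * R) + countA p * (2 * R) := by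
    rw [← posA_add]
    exact countA_le_iff.1 hq
  have hppos := posA_countA_le p
  have hpos : posA (2 * R) ≤ 2 * (R * M) := by
    have := two_mul_posA (2 * R)
    nlinarith only [this, hR, hM]
  have hcR : countA p * (2 * R) ≤ 4 * (R * M) := by nlinarith only [hp]
  have hcount : countA p ≤ R * M := by nlinarith only [hp, hR]
  omega

lemma SplitsAround.countA_eq {p q s t : ℕ} {w : List Bool} (h : SplitsAround uAB p q s w t) :
    countA (p + s + w.length) = countA (p + s) + w.count true := by
  rw [countA_add, h.1]

lemma SplitsAround.length_le {p q s t : ℕ} {w : List Bool} (h : SplitsAround uAB p q s w t)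
    (hw : w.count true < 2) : w.length ≤ 2 * countA q + 2 := by
  by_contra! hlong
  have hmono : countA (p + s) ≤ countA q := countA_mono (by have := h.2; omega)
  have := two_le_count_wordSeg (p := p + s) (n := w.length) (by omega)
  rw [h.1] at this
  omega

/-- The words of length at most `N` in `L` that can be the middle piece of a window in `windows R M`
when each of the two outer pieces has at most one letter `a`. -/
noncomputable def middleWords (L : Set (List Bool)) (R N : ℕ) : Finset (List Bool) :=
  {w ∈ wordsUpTo L N | w.count true ∈ Icc (R - 1) (2 * R)}

lemma mem_middleWords {L : Set (List Bool)} {R N : ℕ} {w : List Bool} :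
    w ∈ middleWords L R N ↔
      (w ∈ L ∧ w.length ≤ N) ∧ R - 1 ≤ w.count true ∧ w.count true ≤ 2 * R := by
  rw [middleWords, mem_filter, mem_wordsUpTo, mem_Icc]

section Decomposition

variable {S₁ S₂ S₃ : Set (List Bool)}

/-- The codes `(w, s, t)` of the windows in `windows R M`: `w` is a piece with two letters `a`,
preceded by `s` and followed by `t` letters of the window. -/
noncomputable def pieceCodes (S₁ S₂ S₃ : Set (List Bool)) (R M : ℕ) :
    Finset (List Bool × ℕ × ℕ) :=
  wordsUpTo S₁ (7 * (R * M)) ×ˢ {0} ×ˢ range (7 * (R * M) + 1) ∪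
    middleWords S₂ R (7 * (R * M)) ×ˢ range (7 * M) ×ˢ range (7 * M) ∪
    wordsUpTo S₃ (7 * (R * M)) ×ˢ range (7 * (R * M) + 1) ×ˢ {0}

lemma card_pieceCodes_le (S₁ S₂ S₃ : Set (List Bool)) (R M : ℕ) :
    #(pieceCodes S₁ S₂ S₃ R M) ≤ #(wordsUpTo S₁ (7 * (R * M))) * (7 * (R * M) + 1) +
      #(middleWords S₂ R (7 * (R * M))) * (7 * M) ^ 2 +
      #(wordsUpTo S₃ (7 * (R * M))) * (7 * (R * M) + 1) := by
  refine (card_union_le _ _).trans (add_le_add ((card_union_le _ _).trans (add_le_add ?_ ?_)) ?_)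
  all_goals simp [sq]

lemma exists_mem_pieceCodes
    (hS : ∀ w ∈ Factors uAB, ∃ x ∈ S₁, ∃ y ∈ S₂, ∃ z ∈ S₃, w = x ++ y ++ z)
    {R M p q : ℕ} (hR : 3 ≤ R) (hM : 2 * R ≤ M) (h : ⟨p, q⟩ ∈ windows R M) :
    ∃ e ∈ pieceCodes S₁ S₂ S₃ R M,
      2 ≤ e.1.count true ∧ SplitsAround uAB p q e.2.1 e.1 e.2.2 := by
  have hlen := length_le_of_mem_windows hR hM h
  obtain ⟨⟨-, hp⟩, hRq, hqR⟩ := mem_windows.1 h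
  have hpq : p ≤ q := by
    by_contra! hlt
    have : countA q ≤ countA p := countA_mono hlt.le
    omega
  obtain ⟨x, hx, y, hy, z, hz, hw⟩ := hS _ (wordSeg_mem_factors uAB p (q - p))
  obtain ⟨splitx, splity, splitz⟩ := splitsAround_of_wordSeg_eq_append hpq hw
  have hsum : p + x.length + y.length + z.length = q := splity.2
  by_cases hx2 : 2 ≤ x.count true
  · refine ⟨(x, 0, y.length + z.length), ?_, hx2, splitx⟩
    simp only [pieceCodes, mem_union, mem_product, mem_wordsUpTo, mem_singleton, mem_range]
    exact .inl (.inl ⟨⟨hx, by omega⟩, trivial, by omega⟩)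
  by_cases hz2 : 2 ≤ z.count true
  · refine ⟨(z, x.length + y.length, 0), ?_, hz2, splitz⟩
    simp only [pieceCodes, mem_union, mem_product, mem_wordsUpTo, mem_singleton, mem_range]
    exact .inr ⟨⟨hz, by omega⟩, by omega, trivial⟩
  have hcount : countA q = countA p + x.count true + y.count true + z.count true := by
    have hz := splitz.countA_eq
    rw [← add_assoc, hsum] at hz
    rw [hz, splity.countA_eq]
    simpa using splitx.countA_eq
  have hxlen := splitx.length_le (by omega)
  have hzlen := splitz.length_le (by omega)
  refine ⟨(y, x.length, z.length), ?_, by dsimp only; omega, splity⟩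
  simp only [pieceCodes, mem_union, mem_product, mem_middleWords, mem_range]
  exact .inl (.inr ⟨⟨⟨hy, by omega⟩, by omega⟩, by omega, by omega⟩)

lemma mul_le_card_middleWords {C₁ C₃ : ℕ} (h₁ : ∀ n, langComplexity S₁ n ≤ C₁)
    (h₃ : ∀ n, langComplexity S₃ n ≤ C₃)
    (hS : ∀ w ∈ Factors uAB, ∃ x ∈ S₁, ∃ y ∈ S₂, ∃ z ∈ S₃, w = x ++ y ++ z)
    {R M : ℕ} (hR : 3 ≤ R) (hM : 2 * R ≤ M) :
    R * M ≤ 64 * (C₁ + C₃) * R ^ 2 + 49 * #(middleWords S₂ R (7 * (R * M))) := by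
  have hRM : 1 ≤ R * M := Nat.mul_pos (by omega) (by omega)
  have outer_le {S : Set (List Bool)} {C : ℕ} (hC : ∀ n, langComplexity S n ≤ C) :
      #(wordsUpTo S (7 * (R * M))) * (7 * (R * M) + 1) ≤ M ^ 2 * (64 * C * R ^ 2) :=
    calc _ ≤ C * (7 * (R * M) + 1) * (7 * (R * M) + 1) :=
          Nat.mul_le_mul_right _ (card_wordsUpTo_le hC _)
      _ ≤ C * (8 * (R * M)) * (8 * (R * M)) := by gcongr <;> omega
      _ = M ^ 2 * (64 * C * R ^ 2) := by ring
  have hcount : R * M ^ 3 ≤ #(pieceCodes S₁ S₂ S₃ R M) :=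
    (mul_cube_le_card_windows R M).trans <|
      uniqueReturns_uAB.card_windows_le _ _ fun _ hI => exists_mem_pieceCodes hS hR hM hI
  refine Nat.le_of_mul_le_mul_left (c := M ^ 2) ?_ (pow_pos (by omega) 2)
  have := hcount.trans (card_pieceCodes_le S₁ S₂ S₃ R M)
  linarith [outer_le h₁, outer_le h₃]

lemma four_pow_le_card_middleWords {C₁ C₃ : ℕ} (h₁ : ∀ n, langComplexity S₁ n ≤ C₁)
    (h₃ : ∀ n, langComplexity S₃ n ≤ C₃)
    (hS : ∀ w ∈ Factors uAB, ∃ x ∈ S₁, ∃ y ∈ S₂, ∃ z ∈ S₃, w = x ++ y ++ z)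
    {r m : ℕ} (hr : 1 ≤ r) (hrm : 2 * r + 1 ≤ m) :
    4 ^ m ≤ 64 * (C₁ + C₃) * (4 ^ r) ^ 2 + 49 * #(middleWords S₂ (4 ^ r) (7 * 4 ^ m)) := by
  have hR : 3 ≤ 4 ^ r := le_trans (by norm_num) (Nat.pow_le_pow_right four_pos hr)
  have hM : 2 * 4 ^ r ≤ 4 ^ (m - r) :=
    calc 2 * 4 ^ r ≤ 4 ^ (r + 1) := by rw [pow_succ]; omega
      _ ≤ 4 ^ (m - r) := Nat.pow_le_pow_right four_pos (by omega)
  have hRM : 4 ^ r * 4 ^ (m - r) = 4 ^ m := by rw [← pow_add, Nat.add_sub_cancel' (by omega)]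
  simpa only [hRM] using mul_le_card_middleWords h₁ h₃ hS hR hM

end Decomposition

lemma sum_card_middleWords_le (L : Set (List Bool)) (N T : ℕ) :
    ∑ i ∈ range T, #(middleWords L (4 ^ (i + 1)) N) ≤ #(wordsUpTo L N) := by
  rw [← card_biUnion]
  · exact card_le_card (biUnion_subset.2 fun i _ => filter_subset _ _)
  · intro i _ j _ hij
    refine disjoint_left.2 fun w hi hj => ?_
    obtain ⟨-, hi⟩ := mem_middleWords.1 hi
    obtain ⟨-, hj⟩ := mem_middleWords.1 hj
    have pow_gap {i j : ℕ} (hij : i < j) : 4 ^ (i + 1) * 4 ≤ 4 ^ (j + 1) :=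
      Nat.pow_le_pow_right four_pos (Nat.succ_le_succ hij)
    have := Nat.one_le_pow (i + 1) 4 four_pos
    have := Nat.one_le_pow (j + 1) 4 four_pos
    rcases hij.lt_or_gt with hij | hij <;> have := pow_gap hij <;> omega

theorem not_factors_uAB_subset_of_langComplexity_le {S₁ S₂ S₃ : Set (List Bool)} {C₁ C₂ C₃ : ℕ}
    (h₁ : ∀ n, langComplexity S₁ n ≤ C₁) (h₂ : ∀ n, langComplexity S₂ n ≤ C₂)
    (h₃ : ∀ n, langComplexity S₃ n ≤ C₃) :
    ¬ ∀ w ∈ Factors uAB, ∃ x ∈ S₁, ∃ y ∈ S₂, ∃ z ∈ S₃, w = x ++ y ++ z := by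
  intro hS
  obtain ⟨T, hT⟩ : ∃ T, T = 392 * C₂ + 1 := ⟨_, rfl⟩
  obtain ⟨B, hB⟩ : ∃ B, B = 64 * (C₁ + C₃) * (4 ^ T) ^ 2 := ⟨_, rfl⟩
  obtain ⟨m, hm⟩ : ∃ m, m = 2 * T + 1 + T * B := ⟨_, rfl⟩
  have hlevel : ∀ i ∈ range T, 4 ^ m ≤ B + 49 * #(middleWords S₂ (4 ^ (i + 1)) (7 * 4 ^ m)) := by
    intro i hi
    have hiT : i + 1 ≤ T := mem_range.1 hi
    refine (four_pow_le_card_middleWords (r := i + 1) h₁ h₃ hS (by omega) (by omega)).trans ?_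
    rw [hB]
    gcongr
    norm_num
  have hsum : T * 4 ^ m ≤ T * B + 392 * C₂ * 4 ^ m :=
    calc T * 4 ^ m = ∑ _ ∈ range T, 4 ^ m := by simp
      _ ≤ ∑ i ∈ range T, (B + 49 * #(middleWords S₂ (4 ^ (i + 1)) (7 * 4 ^ m))) :=
        sum_le_sum hlevel
      _ = T * B + 49 * ∑ i ∈ range T, #(middleWords S₂ (4 ^ (i + 1)) (7 * 4 ^ m)) := by
        simp [sum_add_distrib, mul_sum]
      _ ≤ T * B + 49 * (C₂ * (8 * 4 ^ m)) := by
        have := Nat.one_le_pow m 4 four_pos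
        gcongr
        refine (sum_card_middleWords_le ..).trans ((card_wordsUpTo_le h₂ _).trans ?_)
        gcongr
        omega
      _ = T * B + 392 * C₂ * 4 ^ m := by ring
  have hbound : 4 ^ m ≤ T * B := by
    have : T * 4 ^ m = 392 * C₂ * 4 ^ m + 4 ^ m := by rw [hT]; ring
    omega
  have : m < 4 ^ m := Nat.lt_pow_self (by norm_num)
  omega

/-- there is a word of quadratic complexity not in `𝓦₃`: the word
`u = ∏_{k=1}^∞ a b^k` satisfies `p_u(n) = Θ(n²)` and admits no decomposition
`Fac(u) ⊆ S₁·S₂·S₃` with `p_{Sᵢ}(n) = O(1)`. -/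
theorem stmt16 :
    (∃ c₁ c₂ : ℝ, 0 < c₁ ∧ 0 < c₂ ∧ ∃ N : ℕ, ∀ n : ℕ, N ≤ n →
        c₁ * (n : ℝ) ^ 2 ≤ (complexity uAB n : ℝ) ∧
        (complexity uAB n : ℝ) ≤ c₂ * (n : ℝ) ^ 2) ∧
    ¬ ∃ S₁ S₂ S₃ : Set (List Bool),
        (∃ C : ℕ, ∀ n, langComplexity S₁ n ≤ C) ∧
        (∃ C : ℕ, ∀ n, langComplexity S₂ n ≤ C) ∧
        (∃ C : ℕ, ∀ n, langComplexity S₃ n ≤ C) ∧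
        (∀ w ∈ Factors uAB, ∃ x ∈ S₁, ∃ y ∈ S₂, ∃ z ∈ S₃, w = x ++ y ++ z) := by
  refine ⟨⟨1 / 32, 1, by norm_num, one_pos, 8, fun n hn => ⟨?_, ?_⟩⟩, ?_⟩
  · have : (n : ℝ) ^ 2 ≤ 32 * complexity uAB n := mod_cast sq_le_mul_complexity hn
    linarith
  · rw [one_mul]
    exact mod_cast complexity_le_sq hn
  · rintro ⟨S₁, S₂, S₃, ⟨C₁, h₁⟩, ⟨C₂, h₂⟩, ⟨C₃, h₃⟩, hS⟩
    exact not_factors_uAB_subset_of_langComplexity_le h₁ h₂ h₃ hS
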